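/- arXiv:0711.4316 — 6 statements merged into one kernel-verified Lean document; each statement's English description precedes it below -/
import Mathlib

section
/- For every finite set S of odd primes, there exists a prime q such that q ≡ 5 (mod 8) and q is a quadratic nonresidue modulo p for every p ∈ S (i.e., the Legendre symbol (q/p) equals −1 for all p ∈ S). -/
/-!
Each odd prime `p` has a nonresidue, so the Chinese remainder theorem yields a natural number `a`
with `a ≡ 5 (mod 8)` that is a nonresidue modulo every `p ∈ S`. Such an `a` is odd and divisible by
no `p ∈ S` (zero is a square), hence coprime to `8 * ∏ p ∈ S, p`, and Dirichlet's theorem on primes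
in arithmetic progressions supplies a prime in its residue class.
-/

theorem exists_five_mod_eight_not_isSquare (S : Finset ℕ) (hS : ∀ p ∈ S, p.Prime ∧ Odd p) :
    ∃ a : ℕ, a % 8 = 5 ∧ ∀ p ∈ S, ¬ IsSquare (a : ZMod p) := by
  induction S using Finset.induction_on with
  | empty => exact ⟨5, rfl, by simp⟩
  | insert p S hpS ih =>
    obtain ⟨a, ha8, haS⟩ := ih fun r hr => hS r (Finset.mem_insert_of_mem hr)
    obtain ⟨hp, hodd⟩ := hS p (Finset.mem_insert_self p S)
    have : Fact p.Prime := ⟨hp⟩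
    have hp2 : ringChar (ZMod p) ≠ 2 := by
      rw [ZMod.ringChar_zmod_n]
      rintro rfl
      exact absurd hodd (by decide)
    obtain ⟨b, hb⟩ := FiniteField.exists_nonsquare hp2
    have hcop : Nat.Coprime (8 * ∏ r ∈ S, r) p := by
      refine Nat.Coprime.mul_left ?_ (Nat.Coprime.prod_left fun r hr => ?_)
      · exact Nat.Coprime.pow_left 3 (Nat.coprime_two_left.mpr hodd)
      · exact (Nat.coprime_primes (hS r (Finset.mem_insert_of_mem hr)).1 hp).mpr
          fun h => hpS (h ▸ hr)
    obtain ⟨c, hca, hcb⟩ := Nat.chineseRemainder hcop a b.val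
    refine ⟨c, Eq.trans (hca.of_mul_right _) ha8, fun r hr => ?_⟩
    rcases Finset.mem_insert.mp hr with rfl | hr
    · rwa [(ZMod.natCast_eq_natCast_iff _ _ _).mpr hcb, ZMod.natCast_zmod_val]
    · have hmod : c ≡ a [MOD r] := hca.of_dvd ((Finset.dvd_prod_of_mem _ hr).mul_left 8)
      rw [(ZMod.natCast_eq_natCast_iff _ _ _).mpr hmod]
      exact haS r hr

/-- For every finite set `S` of odd primes, there exists a prime `q` with
`q ≡ 5 (mod 8)` which is a quadratic nonresidue modulo every `p ∈ S`,
i.e. the Legendre symbol `(q/p)` equals `-1` for all `p ∈ S`. -/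
theorem exists_prime_five_mod_eight_nonresidue
    (S : Finset ℕ) (hS : ∀ p ∈ S, p.Prime ∧ Odd p) :
    ∃ q : ℕ, q.Prime ∧ q % 8 = 5 ∧
      ∀ p, ∀ hp : p ∈ S, @legendreSym p ⟨(hS p hp).1⟩ (q : ℤ) = -1 := by
  obtain ⟨a, ha8, haS⟩ := exists_five_mod_eight_not_isSquare S hS
  have hM : 8 * ∏ p ∈ S, p ≠ 0 :=
    mul_ne_zero (by norm_num) (Finset.prod_ne_zero_iff.mpr fun p hp => (hS p hp).1.ne_zero)
  have hcop : a.Coprime (8 * ∏ p ∈ S, p) := by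
    refine Nat.Coprime.mul_right ?_ (Nat.Coprime.prod_right fun p hp => ?_)
    · exact Nat.Coprime.pow_right 3 (Nat.coprime_two_right.mpr (Nat.odd_iff.mpr (by omega)))
    · refine (((hS p hp).1.coprime_iff_not_dvd).mpr fun hdvd => haS p hp ?_).symm
      rw [(ZMod.natCast_eq_zero_iff a p).mpr hdvd]
      exact IsSquare.zero
  obtain ⟨q, -, hq, hqa⟩ := Nat.forall_exists_prime_gt_and_modEq 0 hM hcop
  refine ⟨q, hq, Eq.trans (hqa.of_mul_right _) ha8, fun p hp => ?_⟩
  have : Fact p.Prime := ⟨(hS p hp).1⟩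
  have hmod : q ≡ a [MOD p] := hqa.of_dvd ((Finset.dvd_prod_of_mem _ hp).mul_left 8)
  rw [legendreSym.eq_neg_one_iff', (ZMod.natCast_eq_natCast_iff _ _ _).mpr hmod]
  exact haS p hp
end

section
/- Let q be a prime with q ≡ 5 (mod 8), let D > 1 be a squarefree positive integer not divisible by q such that every odd prime p dividing D has Legendre symbol (q/p) = −1, and let m be an integer with m² ≡ D (mod q). In the quaternion algebra B = (q,D/ℚ) set e₁ = (1+i)/2 and e₂ = (m·i + k)/q. Then the ℤ-submodule O = ℤ·1 + ℤ·e₁ + ℤ·e₂ + ℤ·(e₁e₂) is closed under multiplication (so O is a subring of B containing 1), every element of O has reduced trace and reduced norm in ℤ, and the 4×4 matrix whose (r,s) entry is tr(f_r·f_s), for the basis (f₁,f₂,f₃,f₄) = (1, e₁, e₂, e₁e₂), has determinant of absolute value D². -/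
/-!
Write `q = 4c + 1` and `m² - D = q d` with `c d : ℤ`, and put `e₃ = e₁ e₂`.  From
`e₁² = e₁ + c`, `e₂² = d` and `tr e₃ = m` one gets `e₂ e₁ = m + e₂ - e₃`, and these relations
determine a multiplication table of `1, e₁, e₂, e₃` with integer entries, so the span is a ring.
The trace and norm in the coordinates of this basis are then an integral linear and an integral
quadratic form, and the discriminant of the basis is a direct computation.

The identities are polynomial in the coordinates of `latticePoint` once `D` is
eliminated through `D = m² - q d` and `c` through `c = (q - 1) / 4`.
-/

open Quaternion

/-- The element `w + x e₁ + y e₂ + z e₁e₂` of the quaternion algebra `(q, D / ℚ)`, written in the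
basis `1, i, j, k`, where `e₁ = (1 + i) / 2` and `e₂ = (m i + k) / q`. -/
def latticePoint (q D m w x y z : ℚ) : ℍ[ℚ, q, D] :=
  ⟨w + x / 2 + z * m / 2, x / 2 + y * m / q + z * m / (2 * q), z / 2, y / q + z / (2 * q)⟩

/-- The multiplication table of `1, e₁, e₂, e₁e₂`, extended bilinearly. -/
lemma latticePoint_mul {q D m c d : ℚ} (hq : q ≠ 0) (hc : q = 4 * c + 1)
    (hd : m ^ 2 - D = q * d) (w x y z w' x' y' z' : ℚ) :
    latticePoint q D m w x y z * latticePoint q D m w' x' y' z' =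
      latticePoint q D m
        (w * w' + c * x * x' + m * y * x' + d * y * y' + d * y * z' - c * d * z * z')
        (w * x' + x * w' + x * x' - d * y * z' + m * z * x' + d * z * y')
        (w * y' + c * x * z' + y * w' + y * x' + m * y * z' - c * z * x')
        (w * z' + x * y' + x * z' - y * x' + z * w' + m * z * z') := by
  obtain rfl : D = m ^ 2 - q * d := by linarith
  obtain rfl : c = (q - 1) / 4 := by linarith
  ext <;> simp [latticePoint] <;> field_simp <;> ring

/-- The reduced norm in the coordinates of `1, e₁, e₂, e₁e₂`. -/
lemma latticePoint_norm {q D m c d : ℚ} (hq : q ≠ 0) (hc : q = 4 * c + 1)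
    (hd : m ^ 2 - D = q * d) (w x y z : ℚ) :
    (latticePoint q D m w x y z).re ^ 2 - q * (latticePoint q D m w x y z).imI ^ 2
        - D * (latticePoint q D m w x y z).imJ ^ 2
        + q * D * (latticePoint q D m w x y z).imK ^ 2 =
      w ^ 2 + w * x + m * w * z - c * x ^ 2 - m * x * y - d * y ^ 2 - d * y * z
        + c * d * z ^ 2 := by
  obtain rfl : D = m ^ 2 - q * d := by linarith
  obtain rfl : c = (q - 1) / 4 := by linarith
  simp only [latticePoint]
  field_simp
  ring

/-- Let `q ≡ 5 (mod 8)` be prime, `D > 1` squarefree with `q ∤ D` and `(q/p) = -1` for every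
odd prime `p ∣ D`, and let `m² ≡ D (mod q)`.  In `B = (q,D/ℚ)` set `e₁ = (1+i)/2` and
`e₂ = (m·i + k)/q`.  Then `O = ℤ·1 + ℤ·e₁ + ℤ·e₂ + ℤ·(e₁e₂)` is closed under multiplication,
every element of `O` has reduced trace and reduced norm in `ℤ`, and the Gram matrix
`(tr(f_r f_s))` of the basis `(1, e₁, e₂, e₁e₂)` has determinant of absolute value `D²`. -/
theorem maximalOrder_of_quaternionAlgebra
    (q D : ℕ) (hq : q.Prime) (hq5 : q % 8 = 5) (hD : 1 < D) (hDsf : Squarefree D)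
    (hqD : ¬ q ∣ D)
    (hleg : ∀ p : ℕ, (hp : p.Prime) → Odd p → p ∣ D → @legendreSym p ⟨hp⟩ (q : ℤ) = -1)
    (m : ℤ) (hm : m ^ 2 ≡ (D : ℤ) [ZMOD (q : ℕ)]) :
    ∀ e₁ e₂ : ℍ[ℚ, (q : ℚ), (D : ℚ)],
      e₁ = ⟨1 / 2, 1 / 2, 0, 0⟩ →
      e₂ = ⟨0, (m : ℚ) / q, 0, 1 / q⟩ →
      ∀ f : Fin 4 → ℍ[ℚ, (q : ℚ), (D : ℚ)], f = ![1, e₁, e₂, e₁ * e₂] →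
      ∀ O : Submodule ℤ ℍ[ℚ, (q : ℚ), (D : ℚ)], O = Submodule.span ℤ (Set.range f) →
      (∀ x ∈ O, ∀ y ∈ O, x * y ∈ O) ∧
      (1 : ℍ[ℚ, (q : ℚ), (D : ℚ)]) ∈ O ∧
      (∀ x ∈ O, (∃ t : ℤ, 2 * x.re = (t : ℚ)) ∧
        (∃ n : ℤ, x.re ^ 2 - q * x.imI ^ 2 - D * x.imJ ^ 2 + q * D * x.imK ^ 2 = (n : ℚ))) ∧
      |(Matrix.of fun r s : Fin 4 => 2 * (f r * f s).re).det| = (D : ℚ) ^ 2 := by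
  intro e₁ e₂ he₁ he₂ f hf O hO
  have hq0 : (q : ℚ) ≠ 0 := Nat.cast_ne_zero.mpr hq.ne_zero
  obtain ⟨c, hc⟩ : ∃ c : ℤ, (q : ℤ) = 4 * c + 1 := ⟨(q : ℤ) / 4, by omega⟩
  obtain ⟨d, hd⟩ : ∃ d : ℤ, m ^ 2 - (D : ℤ) = q * d := hm.symm.dvd
  have hc' : (q : ℚ) = 4 * c + 1 := by exact_mod_cast hc
  have hd' : (m : ℚ) ^ 2 - D = q * d := by exact_mod_cast hd
  have he₃ : e₁ * e₂ = ⟨m / 2, m / (2 * q), 1 / 2, 1 / (2 * q)⟩ := by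
    subst he₁ he₂
    ext <;> simp <;> field_simp
  have hmem : ∀ x, x ∈ O ↔ ∃ a : Fin 4 → ℤ, x = latticePoint q D m (a 0) (a 1) (a 2) (a 3) := by
    intro x
    rw [hO, Submodule.mem_span_range_iff_exists_fun]
    refine exists_congr fun a => ?_
    have hsum : ∑ i, a i • f i = latticePoint q D m (a 0) (a 1) (a 2) (a 3) := by
      rw [hf, Fin.sum_univ_four, he₃, he₁, he₂]
      ext <;> simp [latticePoint] <;> ring
    rw [hsum, eq_comm]
  refine ⟨?_, ?_, ?_, ?_⟩
  · intro x hx y hy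
    obtain ⟨a, rfl⟩ := (hmem x).1 hx
    obtain ⟨b, rfl⟩ := (hmem y).1 hy
    rw [latticePoint_mul hq0 hc' hd', hmem]
    refine ⟨![a 0 * b 0 + c * a 1 * b 1 + m * a 2 * b 1 + d * a 2 * b 2 + d * a 2 * b 3
          - c * d * a 3 * b 3,
        a 0 * b 1 + a 1 * b 0 + a 1 * b 1 - d * a 2 * b 3 + m * a 3 * b 1 + d * a 3 * b 2,
        a 0 * b 2 + c * a 1 * b 3 + a 2 * b 0 + a 2 * b 1 + m * a 2 * b 3 - c * a 3 * b 1,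
        a 0 * b 3 + a 1 * b 2 + a 1 * b 3 - a 2 * b 1 + a 3 * b 0 + m * a 3 * b 3], ?_⟩
    simp
  · rw [hO]
    exact Submodule.subset_span ⟨0, by simp [hf]⟩
  · intro x hx
    obtain ⟨a, rfl⟩ := (hmem x).1 hx
    refine ⟨⟨2 * a 0 + a 1 + m * a 3, ?_⟩,
      ⟨a 0 ^ 2 + a 0 * a 1 + m * a 0 * a 3 - c * a 1 ^ 2 - m * a 1 * a 2 - d * a 2 ^ 2
        - d * a 2 * a 3 + c * d * a 3 ^ 2, ?_⟩⟩
    · simp only [latticePoint]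
      push_cast
      ring
    · rw [latticePoint_norm hq0 hc' hd']
      push_cast
      ring
  · have hdet : (Matrix.of fun r s : Fin 4 => 2 * (f r * f s).re).det = -(D : ℚ) ^ 2 := by
      have hgram : (Matrix.of fun r s : Fin 4 => 2 * (f r * f s).re) =
          !![2, 1, 0, (m : ℚ);
             1, 1 + 2 * c, m, m;
             0, m, 2 * d, d;
             m, m, d, m ^ 2 - 2 * c * d] := by
        have hD' : (D : ℚ) = m ^ 2 - q * d := by linarith
        have hc'' : (c : ℚ) = (q - 1) / 4 := by linarith
        ext r s
        rw [hf, he₃, he₁, he₂, hc'']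
        fin_cases r <;> fin_cases s <;> simp <;> field_simp <;> (try rw [hD']) <;> ring
      have hD' : (D : ℚ) = m ^ 2 - (4 * c + 1) * d := by rw [← hc']; linarith
      rw [hgram, hD']
      simp [Matrix.det_succ_row_zero, Fin.sum_univ_succ, Fin.succAbove]
      ring
    rw [hdet, abs_neg, abs_of_nonneg (by positivity)]
end

section
/- Let q and D be positive rational numbers and x₁, x₂, x₃ rational numbers. Set N = −q·x₁² − D·x₂² + q·D·x₃², and assume N > 0 and x₁ + x₃√D ≠ 0. Let M be the real 2×2 matrix [[x₂√D, q(x₁ − x₃√D)], [x₁ + x₃√D, −x₂√D]], acting on complex numbers by the Möbius transformation z ↦ (M₁₁z + M₁₂)/(M₂₁z + M₂₂). Then the set of z ∈ ℂ with M₂₁z + M₂₂ ≠ 0 that are fixed by this transformation is exactly the two-element set { (x₂√D + i√N)/(x₁ + x₃√D), (x₂√D − i√N)/(x₁ + x₃√D) }, and both fixed points are non-real. -/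
/-!
Write `a = x₂√D`, `b = q(x₁ - x₃√D)`, `c = x₁ + x₃√D`, `n = √N`, so the matrix is
`[[a, b], [c, -a]]` and its determinant is `-(a² + bc) = N = n²`. Completing the square, the
fixed-point equation `(az + b) = z(cz - a)` becomes `(cz - a)² = a² + bc = (in)²`, that is
`cz - a = ±in`. As `n ≠ 0` neither solution is the pole `a / c`; as `a`, `c`, `n` are real, the
solutions have imaginary parts `±n / c ≠ 0`.
-/

/-- Fixed points of a trace-zero Möbius transformation, for `r` a nonzero square root of minus the
determinant. -/
lemma moebius_traceZero_fixed_iff {a b c r : ℂ} (hc : c ≠ 0) (hr : r ≠ 0)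
    (h : a ^ 2 + b * c = r ^ 2) (z : ℂ) :
    (c * z + -a ≠ 0 ∧ (a * z + b) / (c * z + -a) = z) ↔ z = (a + r) / c ∨ z = (a - r) / c := by
  rw [eq_div_iff hc, eq_div_iff hc]
  constructor
  · rintro ⟨h0, hz⟩
    rw [div_eq_iff h0] at hz
    have hsq : (c * z - a) ^ 2 = r ^ 2 := by linear_combination h - c * hz
    rcases sq_eq_sq_iff_eq_or_eq_neg.mp hsq with h1 | h1
    · left; linear_combination h1
    · right; linear_combination h1
  · intro hz
    have hcz : c * z + -a = r ∨ c * z + -a = -r := by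
      rcases hz with h1 | h1
      · left; linear_combination h1
      · right; linear_combination h1
    have h0 : c * z + -a ≠ 0 := by
      rcases hcz with h1 | h1 <;> rw [h1]
      · exact hr
      · exact neg_ne_zero.mpr hr
    have hsq : (c * z + -a) ^ 2 = r ^ 2 := by
      rcases hcz with h1 | h1 <;> rw [h1]
      ring
    refine ⟨h0, (div_eq_iff h0).mpr (mul_left_cancel₀ hc ?_)⟩
    linear_combination h - hsq

lemma im_real_add_I_mul_div_real (a n c : ℝ) :
    (((a : ℂ) + Complex.I * (n : ℂ)) / (c : ℂ)).im = n / c := by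
  simp [Complex.div_ofReal_im]


/-- Let `q, D > 0` be rational and `x₁, x₂, x₃` rational with
`N = -q·x₁² - D·x₂² + q·D·x₃² > 0` and `x₁ + x₃√D ≠ 0`.  The Möbius transformation of the
matrix `[[x₂√D, q(x₁ - x₃√D)], [x₁ + x₃√D, -x₂√D]]` has fixed-point set (away from the pole)
exactly `{(x₂√D + i√N)/(x₁ + x₃√D), (x₂√D - i√N)/(x₁ + x₃√D)}`, and both fixed points are
non-real. -/
theorem fixedPoints_of_quaternion_moebius
    (q D x₁ x₂ x₃ : ℚ) (hq : 0 < q) (hD : 0 < D)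
    (N : ℚ) (hNdef : N = -q * x₁ ^ 2 - D * x₂ ^ 2 + q * D * x₃ ^ 2) (hN : 0 < N)
    (hx : (x₁ : ℝ) + (x₃ : ℝ) * Real.sqrt (D : ℝ) ≠ 0) :
    ({z : ℂ |
        (((x₁ : ℂ) + (x₃ : ℂ) * (Real.sqrt (D : ℝ) : ℂ)) * z +
            (-(x₂ : ℂ) * (Real.sqrt (D : ℝ) : ℂ)) ≠ 0) ∧
        ((x₂ : ℂ) * (Real.sqrt (D : ℝ) : ℂ) * z +
            (q : ℂ) * ((x₁ : ℂ) - (x₃ : ℂ) * (Real.sqrt (D : ℝ) : ℂ))) /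
          (((x₁ : ℂ) + (x₃ : ℂ) * (Real.sqrt (D : ℝ) : ℂ)) * z +
            (-(x₂ : ℂ) * (Real.sqrt (D : ℝ) : ℂ))) = z} =
      {((x₂ : ℂ) * (Real.sqrt (D : ℝ) : ℂ) + Complex.I * (Real.sqrt (N : ℝ) : ℂ)) /
          ((x₁ : ℂ) + (x₃ : ℂ) * (Real.sqrt (D : ℝ) : ℂ)),
        ((x₂ : ℂ) * (Real.sqrt (D : ℝ) : ℂ) - Complex.I * (Real.sqrt (N : ℝ) : ℂ)) /
          ((x₁ : ℂ) + (x₃ : ℂ) * (Real.sqrt (D : ℝ) : ℂ))}) ∧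
    (((x₂ : ℂ) * (Real.sqrt (D : ℝ) : ℂ) + Complex.I * (Real.sqrt (N : ℝ) : ℂ)) /
        ((x₁ : ℂ) + (x₃ : ℂ) * (Real.sqrt (D : ℝ) : ℂ))).im ≠ 0 ∧
    (((x₂ : ℂ) * (Real.sqrt (D : ℝ) : ℂ) - Complex.I * (Real.sqrt (N : ℝ) : ℂ)) /
        ((x₁ : ℂ) + (x₃ : ℂ) * (Real.sqrt (D : ℝ) : ℂ))).im ≠ 0 := by
  have hn : Real.sqrt (N : ℝ) ≠ 0 := (Real.sqrt_pos.mpr (by exact_mod_cast hN)).ne'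
  have hN2 : ((Real.sqrt (N : ℝ) : ℝ) : ℂ) ^ 2 = (N : ℂ) := by
    exact_mod_cast congrArg Complex.ofReal (Real.sq_sqrt (x := (N : ℝ)) (by exact_mod_cast hN.le))
  have hD2 : ((Real.sqrt (D : ℝ) : ℝ) : ℂ) ^ 2 = (D : ℂ) := by
    exact_mod_cast congrArg Complex.ofReal (Real.sq_sqrt (x := (D : ℝ)) (by exact_mod_cast hD.le))
  have hNc : (N : ℂ) = -q * x₁ ^ 2 - D * x₂ ^ 2 + q * D * x₃ ^ 2 := by
    rw [hNdef]; push_cast; ring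
  have hc : (x₁ : ℂ) + (x₃ : ℂ) * (Real.sqrt (D : ℝ) : ℂ) ≠ 0 := by exact_mod_cast hx
  have hr : Complex.I * (Real.sqrt (N : ℝ) : ℂ) ≠ 0 :=
    mul_ne_zero Complex.I_ne_zero (by exact_mod_cast hn)
  refine ⟨?_, ?_, ?_⟩
  · ext z
    simp only [Set.mem_setOf_eq, Set.mem_insert_iff, Set.mem_singleton_iff, neg_mul]
    refine moebius_traceZero_fixed_iff hc hr ?_ z
    rw [mul_pow Complex.I, Complex.I_sq, hN2, hNc]
    linear_combination ((x₂ : ℂ) ^ 2 - q * x₃ ^ 2) * hD2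
  · have h := im_real_add_I_mul_div_real (x₂ * Real.sqrt D) (Real.sqrt N) (x₁ + x₃ * Real.sqrt D)
    push_cast at h
    rw [h]
    exact div_ne_zero hn hx
  · have h := im_real_add_I_mul_div_real (x₂ * Real.sqrt D) (-Real.sqrt N) (x₁ + x₃ * Real.sqrt D)
    push_cast at h
    rw [mul_neg, ← sub_eq_add_neg] at h
    rw [h]
    exact div_ne_zero (neg_ne_zero.mpr hn) hx
end

section
/- In the quaternion algebra B = (5,6/ℚ), let s₂ = −(6/5)i + j + (4/5)k, s₄ = 1 − (1/5)i + (1/2)j + (3/10)k, and s₆ = 3/2 − (3/10)i + (1/5)k. Then s₂² = −6, (s₄ − 1)² = −1, s₄⁴ = −4, (s₆ − 3/2)² = −3/4, s₆⁶ = −27, and there is a nonzero rational number c with s₂·s₄·s₆ = c·1. Consequently the images of s₂, s₄, s₆ in B^×/ℚ^× satisfy the triangle-group relations s₂² = s₄⁴ = s₆⁶ = s₂s₄s₆ = 1, and ℚ(s₂) ≅ ℚ(√−6), ℚ(s₄) ≅ ℚ(√−1), ℚ(s₆) ≅ ℚ(√−3). -/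
/-!
The identities between `s₂`, `s₄`, `s₆` are coordinate computations in `(5,6/ℚ)`; the product
`s₂ s₄ s₆` is the scalar `-6`.

For the fields, each `ℚ[s]` is generated by a square root of `-d` (`d = 6, 1, 3`): `s₂` itself,
`s₄ - 1`, and `2 s₆ - 3`. Since `X² + d` is irreducible over `ℚ` for `d > 0`, it is the
minimal polynomial of such an element `t` although `(5,6/ℚ)` is noncommutative, so the kernel of
evaluation at `t` is `(X² + d)` and its image `ℚ[t]` is `ℚ[X]/(X² + d)`
(`nonempty_adjoin_algEquiv`).
-/

open Quaternion Polynomial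

lemma irreducible_X_sq_add_C {d : ℚ} (hd : 0 < d) : Irreducible (X ^ 2 + C d : ℚ[X]) := by
  rw [irreducible_iff_roots_eq_zero_of_degree_le_three
    (by rw [natDegree_X_pow_add_C]) (by rw [natDegree_X_pow_add_C]; norm_num)]
  refine Multiset.eq_zero_of_forall_notMem fun x hx => ?_
  have h := (mem_roots'.mp hx).2
  simp only [IsRoot.def, eval_add, eval_pow, eval_X, eval_C] at h
  nlinarith [sq_nonneg x]

/-- If an affine change of variable `t = b s + a` (with `b ≠ 0`) squares to `-d` with `d > 0`,
then `ℚ[s] ≅ ℚ[X]/(X² + d)`. The ambient algebra need not be commutative. -/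
lemma nonempty_adjoin_algEquiv {A : Type*} [Ring A] [Algebra ℚ A] [Nontrivial A]
    (s : A) (a b d : ℚ) (hb : b ≠ 0) (hd : 0 < d)
    (h : (b • s + algebraMap ℚ A a) ^ 2 = algebraMap ℚ A (-d)) :
    Nonempty ((Algebra.adjoin ℚ {s}) ≃ₐ[ℚ] AdjoinRoot (X ^ 2 + C d : ℚ[X])) := by
  set t := b • s + algebraMap ℚ A a with ht
  have hadj : Algebra.adjoin ℚ {s} = Algebra.adjoin ℚ {t} := by
    apply le_antisymm <;> rw [Algebra.adjoin_le_iff, Set.singleton_subset_iff,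
      SetLike.mem_coe]
    · have hs : s = b⁻¹ • (t - algebraMap ℚ A a) := by
        rw [ht, add_sub_cancel_right, smul_smul, inv_mul_cancel₀ hb, one_smul]
      rw [hs]
      exact Subalgebra.smul_mem _ (sub_mem (Algebra.self_mem_adjoin_singleton ℚ t)
        (Subalgebra.algebraMap_mem _ a)) _
    · exact add_mem (Subalgebra.smul_mem _ (Algebra.self_mem_adjoin_singleton ℚ s) _)
        (Subalgebra.algebraMap_mem _ a)
  have hmin : X ^ 2 + C d = minpoly ℚ t :=
    minpoly.eq_of_irreducible_of_monic (irreducible_X_sq_add_C hd) (by simp [h])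
      (monic_X_pow_add_C d two_ne_zero)
  have hker : RingHom.ker (aeval t : ℚ[X] →ₐ[ℚ] A).rangeRestrict
      = Ideal.span {(X ^ 2 + C d : ℚ[X])} := by
    rw [AlgHom.ker_rangeRestrict, hmin]
    exact minpoly.ker_aeval_eq_span_minpoly ℚ t
  exact ⟨(Subalgebra.equivOfEq _ _
      (hadj.trans (Algebra.adjoin_singleton_eq_range_aeval ℚ t))).trans
    ((Ideal.quotientKerAlgEquivOfSurjective
      (aeval t : ℚ[X] →ₐ[ℚ] A).rangeRestrict_surjective).symm.trans
      (Ideal.quotientEquivAlgOfEq ℚ hker))⟩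

/-- In `B = (5,6/ℚ)`, the elements `s₂ = -(6/5)i + j + (4/5)k`,
`s₄ = 1 - (1/5)i + (1/2)j + (3/10)k`, `s₆ = 3/2 - (3/10)i + (1/5)k` satisfy
`s₂² = -6`, `(s₄-1)² = -1`, `s₄⁴ = -4`, `(s₆-3/2)² = -3/4`, `s₆⁶ = -27` and
`s₂·s₄·s₆ = c` for a nonzero rational `c`; consequently their images in `B^×/ℚ^×`
satisfy the `(2,4,6)` triangle relations and `ℚ(s₂) ≅ ℚ(√-6)`, `ℚ(s₄) ≅ ℚ(√-1)`,
`ℚ(s₆) ≅ ℚ(√-3)`. -/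
theorem triangle_group_generators_disc_six :
    ∀ s₂ s₄ s₆ : ℍ[ℚ, (5 : ℚ), (6 : ℚ)],
      s₂ = ⟨0, -(6 / 5), 1, 4 / 5⟩ →
      s₄ = ⟨1, -(1 / 5), 1 / 2, 3 / 10⟩ →
      s₆ = ⟨3 / 2, -(3 / 10), 0, 1 / 5⟩ →
      s₂ ^ 2 = -6 ∧
      (s₄ - 1) ^ 2 = -1 ∧
      s₄ ^ 4 = -4 ∧
      (s₆ - algebraMap ℚ ℍ[ℚ, (5 : ℚ), (6 : ℚ)] (3 / 2)) ^ 2 =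
        algebraMap ℚ ℍ[ℚ, (5 : ℚ), (6 : ℚ)] (-(3 / 4)) ∧
      s₆ ^ 6 = -27 ∧
      (∃ c : ℚ, c ≠ 0 ∧ s₂ * s₄ * s₆ = algebraMap ℚ ℍ[ℚ, (5 : ℚ), (6 : ℚ)] c) ∧
      Nonempty ((Algebra.adjoin ℚ {s₂}) ≃ₐ[ℚ] AdjoinRoot (X ^ 2 + 6 : ℚ[X])) ∧
      Nonempty ((Algebra.adjoin ℚ {s₄}) ≃ₐ[ℚ] AdjoinRoot (X ^ 2 + 1 : ℚ[X])) ∧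
      Nonempty ((Algebra.adjoin ℚ {s₆}) ≃ₐ[ℚ] AdjoinRoot (X ^ 2 + 3 : ℚ[X])) := by
  rintro s₂ s₄ s₆ rfl rfl rfl
  -- Writing the numerals as scalars exposes their coordinates.
  have e6 : (-6 : ℍ[ℚ, (5 : ℚ), (6 : ℚ)]) = algebraMap ℚ _ (-6) := by simp
  have e1 : (-1 : ℍ[ℚ, (5 : ℚ), (6 : ℚ)]) = algebraMap ℚ _ (-1) := by simp
  have e4 : (-4 : ℍ[ℚ, (5 : ℚ), (6 : ℚ)]) = algebraMap ℚ _ (-4) := by simp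
  have e27 : (-27 : ℍ[ℚ, (5 : ℚ), (6 : ℚ)]) = algebraMap ℚ _ (-27) := by simp
  refine ⟨?_, ?_, ?_, ?_, ?_, ⟨-6, by norm_num, ?_⟩, ?_, ?_, ?_⟩
  · rw [e6]
    ext <;> simp [pow_succ, QuaternionAlgebra.algebraMap_eq, -map_neg] <;> norm_num
  · rw [e1]
    ext <;> simp [pow_succ] <;> norm_num
  · rw [e4]
    ext <;> simp [pow_succ, QuaternionAlgebra.algebraMap_eq, -map_neg] <;> norm_num
  · ext <;> simp [pow_succ, QuaternionAlgebra.algebraMap_eq] <;> norm_num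
  · rw [e27]
    ext <;> simp [pow_succ, QuaternionAlgebra.algebraMap_eq, -map_neg] <;> norm_num
  · ext <;> simp [QuaternionAlgebra.algebraMap_eq] <;> norm_num
  -- In the last three goals the numeral in `X ^ 2 + d` is definitionally `C d`.
  · refine nonempty_adjoin_algEquiv _ 0 1 6 one_ne_zero (by norm_num) ?_
    ext <;> simp [pow_succ, QuaternionAlgebra.algebraMap_eq] <;> norm_num
  · refine nonempty_adjoin_algEquiv _ (-1) 1 1 one_ne_zero one_pos ?_
    ext <;> simp [pow_succ, QuaternionAlgebra.algebraMap_eq] <;> norm_num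
  · refine nonempty_adjoin_algEquiv _ (-3) 2 3 two_ne_zero (by norm_num) ?_
    ext <;> simp [pow_succ, QuaternionAlgebra.algebraMap_eq] <;> norm_num
end

section
/- Suppose integers A₁, A₂, A₃, A₄, A₅ satisfy: A₂ ≥ 0; 15 − 12A₁ + 28A₂ − 8A₃ − 12A₄ − 4A₅ ≥ 0; −5 + 4A₁ − 9A₂ + 3A₃ + 4A₄ + A₅ ≥ 0; −4 + 3A₁ − 8A₂ + 2A₃ + 4A₄ + A₅ ≥ 0; 25 − 20A₁ + 36A₂ − 12A₃ − 20A₄ − 4A₅ ≥ 0; and A₁ = 0. Then (A₁, A₂, A₃, A₄, A₅) = (0, 0, 1, 1, −2). -/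
/-- If integers `A₁,...,A₅` satisfy the six cusp conditions (non-negative vanishing order at
each cusp of `Γ₀(12)`, with order exactly `A₁ = 0` at `∞`), then
`(A₁, A₂, A₃, A₄, A₅) = (0, 0, 1, 1, -2)`. -/
theorem theta_eta_product_unique
    (A₁ A₂ A₃ A₄ A₅ : ℤ)
    (h0 : 0 ≤ A₂)
    (h1 : 0 ≤ 15 - 12 * A₁ + 28 * A₂ - 8 * A₃ - 12 * A₄ - 4 * A₅)
    (h2 : 0 ≤ -5 + 4 * A₁ - 9 * A₂ + 3 * A₃ + 4 * A₄ + A₅)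
    (h3 : 0 ≤ -4 + 3 * A₁ - 8 * A₂ + 2 * A₃ + 4 * A₄ + A₅)
    (h4 : 0 ≤ 25 - 20 * A₁ + 36 * A₂ - 12 * A₃ - 20 * A₄ - 4 * A₅)
    (h5 : A₁ = 0) :
    A₁ = 0 ∧ A₂ = 0 ∧ A₃ = 1 ∧ A₄ = 1 ∧ A₅ = -2 := by
  subst h5
  -- Writing `x, y, z, w` for the right-hand sides of `h1`, `h2`, `h3`, `h4`, the valence formula
  -- reads `x + 4 * y + 4 * z + w + 4 * A₂ = 4`. Since `x ≡ 3` and `w ≡ 1` modulo `4`, this forces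
  -- `x = 3`, `w = 1` and `y = z = A₂ = 0`, a linear system with a single solution.
  have hx : 3 ≤ 15 - 12 * 0 + 28 * A₂ - 8 * A₃ - 12 * A₄ - 4 * A₅ := by omega
  have hw : 1 ≤ 25 - 20 * 0 + 36 * A₂ - 12 * A₃ - 20 * A₄ - 4 * A₅ := by omega
  have hA₂ : A₂ = 0 := by linarith
  refine ⟨rfl, hA₂, ?_, ?_, ?_⟩ <;> linarith
end

section
/- In the quaternion algebra B = (13,10/ℚ), let e₀ = 1, e₁ = (1 + i)/2, e₂ = (6i + k)/13, e₃ = (78 + 6i + 13j + k)/26. Then the ℤ-submodule O = ℤe₀ + ℤe₁ + ℤe₂ + ℤe₃ is closed under multiplication (so O is a subring of B containing 1), every element of O has reduced trace and reduced norm in ℤ, and the 4×4 matrix whose (r,s) entry is tr(e_r·e_s) has determinant of absolute value 100. -/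
/-!
In the basis `e₀, e₁, e₂, e₃` the multiplication table of `B = (13,10/ℚ)` has integer structure
constants, and the trace and norm forms become the integral forms `2a + b + 6d` and
`a² + ab + 6ad - 3b² - 6bc - 2c² - 2cd + 6d²`. Membership in the lattice is first rewritten in
coordinates (`mem_span_basis_iff`), so that every claim becomes a polynomial identity over `ℚ`.
-/

open Quaternion

/-- `O` in coordinates: the components of `a e₀ + b e₁ + c e₂ + d e₃` with respect to
`1, i, j, k`. -/
theorem mem_span_basis_iff (x : ℍ[ℚ, (13 : ℚ), (10 : ℚ)]) :
    x ∈ Submodule.span ℤ (Set.range (![1, ⟨1 / 2, 1 / 2, 0, 0⟩, ⟨0, 6 / 13, 0, 1 / 13⟩,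
      ⟨3, 3 / 13, 1 / 2, 1 / 26⟩] : Fin 4 → ℍ[ℚ, (13 : ℚ), (10 : ℚ)])) ↔
    ∃ a b c d : ℤ, x = ⟨a + b / 2 + 3 * d, b / 2 + 6 * c / 13 + 3 * d / 13, d / 2,
      c / 13 + d / 26⟩ := by
  rw [Submodule.mem_span_range_iff_exists_fun]
  constructor
  · rintro ⟨u, rfl⟩
    refine ⟨u 0, u 1, u 2, u 3, ?_⟩
    ext <;> simp [Fin.sum_univ_four] <;> ring
  · rintro ⟨a, b, c, d, rfl⟩
    refine ⟨![a, b, c, d], ?_⟩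
    ext <;> simp [Fin.sum_univ_four] <;> ring

/-- In `B = (13,10/ℚ)` let `e₀ = 1`, `e₁ = (1+i)/2`, `e₂ = (6i+k)/13`,
`e₃ = (78 + 6i + 13j + k)/26`.  Then `O = ℤe₀ + ℤe₁ + ℤe₂ + ℤe₃` is closed under
multiplication, every element of `O` has reduced trace and reduced norm in `ℤ`, and the
Gram matrix `(tr(e_r e_s))` has determinant of absolute value `100`. -/
theorem maximal_order_disc_ten :
    ∀ f : Fin 4 → ℍ[ℚ, (13 : ℚ), (10 : ℚ)],
      f = ![1, ⟨1 / 2, 1 / 2, 0, 0⟩, ⟨0, 6 / 13, 0, 1 / 13⟩, ⟨3, 3 / 13, 1 / 2, 1 / 26⟩] →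
      ∀ O : Submodule ℤ ℍ[ℚ, (13 : ℚ), (10 : ℚ)], O = Submodule.span ℤ (Set.range f) →
      (∀ x ∈ O, ∀ y ∈ O, x * y ∈ O) ∧
      (1 : ℍ[ℚ, (13 : ℚ), (10 : ℚ)]) ∈ O ∧
      (∀ x ∈ O, (∃ t : ℤ, 2 * x.re = (t : ℚ)) ∧
        (∃ n : ℤ, (x * star x).re = (n : ℚ))) ∧
      |(Matrix.of fun r s : Fin 4 => 2 * (f r * f s).re).det| = 100 := by
  rintro f hf O rfl
  refine ⟨?_, ?_, ?_, ?_⟩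
  · subst hf
    intro x hx y hy
    rw [mem_span_basis_iff] at hx hy ⊢
    obtain ⟨a, b, c, d, rfl⟩ := hx
    obtain ⟨a', b', c', d', rfl⟩ := hy
    -- The coordinates of the product, read off from the table of the `e_r * e_s`.
    refine ⟨a * a' + 3 * (b * b') + 6 * (c * b') + 2 * (c * c') + 2 * (c * d') - 6 * (d * d'),
      a * b' + b * a' + b * b' - 2 * (c * d') + 6 * (d * b') + 2 * (d * c'),
      a * c' + 3 * (b * d') + c * a' + c * b' + 6 * (c * d') - 3 * (d * b'),
      a * d' + b * c' + b * d' - c * b' + d * a' + 6 * (d * d'), ?_⟩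
    ext <;> simp <;> ring
  · subst hf
    exact Submodule.subset_span ⟨0, rfl⟩
  · subst hf
    intro x hx
    rw [mem_span_basis_iff] at hx
    obtain ⟨a, b, c, d, rfl⟩ := hx
    refine ⟨⟨2 * a + b + 6 * d, ?_⟩,
      ⟨a ^ 2 + a * b + 6 * (a * d) - 3 * b ^ 2 - 6 * (b * c) - 2 * c ^ 2 - 2 * (c * d)
        + 6 * d ^ 2, ?_⟩⟩
    · push_cast
      ring
    · simp
      ring
  · have hM : (Matrix.of fun r s : Fin 4 => 2 * (f r * f s).re) =
        !![2, 1, 0, 6; 1, 7, 6, 6; 0, 6, 4, 2; 6, 6, 2, 24] := by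
      subst hf
      ext r s
      fin_cases r <;> fin_cases s <;> simp <;> norm_num
    rw [hM]
    simp [Matrix.det_succ_row_zero, Fin.sum_univ_succ, Fin.succAbove]
    norm_num
end
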